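/- Let ρ₀ ∈ (0,1) be a constant and let X = (X_1,…,X_n) be a centered Gaussian random vector in ℝ^n with var(X_i) = 1 for all i and whose correlation matrix R satisfies R_{ij} ≤ ρ₀ for all i ≠ j. Then there is a universal constant c₀ > 0 such that every median of max_{1≤i≤n} X_i is at least √(2(1−ρ₀)log n) − c₀ √(log log(max{n,3})). -/

import Mathlib

open MeasureTheory ProbabilityTheory Real

/-- `X` is a centered Gaussian random vector with standardized entries and
correlation (= covariance) matrix `R`: every linear combination of the
coordinates is a centered real Gaussian with the corresponding variance,
and `R` has unit diagonal. -/
def IsCenteredGaussianVec {Ω : Type*} [MeasureSpace Ω] {n : ℕ}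
    (X : Fin n → Ω → ℝ) (R : Matrix (Fin n) (Fin n) ℝ) : Prop :=
  (∀ i, Measurable (X i)) ∧ (∀ i, R i i = 1) ∧
    ∀ a : Fin n → ℝ,
      Measure.map (fun ω => ∑ i, a i * X i ω) (ℙ : Measure Ω) =
        gaussianReal 0 (Real.toNNReal (∑ i, ∑ j, a i * R i j * a j))

/-- `m` is a median of the real random variable `W`. -/
def IsMedian {Ω : Type*} [MeasureSpace Ω] (W : Ω → ℝ) (m : ℝ) : Prop :=
  (1 : ENNReal) / 2 ≤ (ℙ : Measure Ω) {ω | W ω ≤ m} ∧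
    (1 : ENNReal) / 2 ≤ (ℙ : Measure Ω) {ω | m ≤ W ω}

open scoped NNReal

/-!
For `i ≠ j` the increment `X i - X j` has variance at least `2 * (1 - ρ₀)`, the variance of the
increments of `n` independent `N(0, 1 - ρ₀)` variables. By the Sudakov–Fernique inequality the mean
of `max X` is therefore at least the mean of the maximum of these independent variables, which is
at least `√(1 - ρ₀) * (√(2 log n) - O(1))`. To prove Sudakov–Fernique, rotate one Gaussian vector
into an independent copy of the other and differentiate the mean of the soft maximum along the way:
by Gaussian integration by parts the derivative is a nonnegative combination of the differences of
increment variances, all of which have the same sign.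

Rotating between two independent copies `X` and `Y` of the same vector preserves their joint law,
which gives the Maurey–Pisier bound `𝔼 |max X - max Y| ≤ (π / 2) * max 𝔼 |X i| ≤ π / 2`; hence every
median of `max X` is at least its mean minus `π`. All the errors are `O(1)`, and `O(1)` is absorbed
by `√(log log (max n 3)) ≥ √(log log 3) > 0`.
-/

-- `rot θ (x, y) = (cos θ • x + sin θ • y, -sin θ • x + cos θ • y)`
local notation "rot" => ContinuousLinearMap.rotation

section SoftMax

lemma fderiv_exp_mul_apply {ι : Type*} [Finite ι] (β : ℝ) (i : ι) (x v : ι → ℝ) :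
    fderiv ℝ (fun y : ι → ℝ ↦ exp (β * y i)) x v = β * (exp (β * x i) * v i) := by
  cases nonempty_fintype ι
  have h : HasFDerivAt (fun y : ι → ℝ ↦ exp (β * y i))
      (exp (β * x i) • β • ContinuousLinearMap.proj (R := ℝ) (φ := fun _ : ι ↦ ℝ) i) x :=
    ((hasFDerivAt_apply i x).const_mul β).exp
  simp only [h.fderiv, smul_apply, ContinuousLinearMap.proj_apply, smul_eq_mul]
  ring

variable {ι : Type*} [Fintype ι]

/-- The partition function `∑ i, exp (β x i)` of the energy levels `-x i` at inverse temperature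
`β`. -/
noncomputable def partitionFunction (β : ℝ) (x : ι → ℝ) : ℝ := ∑ i, exp (β * x i)

/-- The soft maximum `β⁻¹ log ∑ i, exp (β x i)`, a smooth approximation of `⨆ i, x i` as
`β → ∞`. -/
noncomputable def softMax (β : ℝ) (x : ι → ℝ) : ℝ := log (partitionFunction β x) / β

/-- The Gibbs probability weights `exp (β x i) / ∑ j, exp (β x j)`, which are the partial
derivatives of `softMax β`. -/
noncomputable def gibbsWeight (β : ℝ) (i : ι) (x : ι → ℝ) : ℝ :=
  exp (β * x i) / partitionFunction β x

lemma contDiff_partitionFunction (β : ℝ) :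
    ContDiff ℝ 1 (partitionFunction β : (ι → ℝ) → ℝ) := by
  unfold partitionFunction
  fun_prop

lemma fderiv_partitionFunction_apply (β : ℝ) (x v : ι → ℝ) :
    fderiv ℝ (partitionFunction β) x v = β * ∑ i, exp (β * x i) * v i := by
  unfold partitionFunction
  rw [fderiv_fun_sum fun i _ ↦ by fun_prop]
  simp only [sum_apply, fderiv_exp_mul_apply, Finset.mul_sum]

variable [Nonempty ι]

lemma partitionFunction_pos (β : ℝ) (x : ι → ℝ) : 0 < partitionFunction β x :=
  Finset.sum_pos (fun _ _ ↦ exp_pos _) Finset.univ_nonempty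

lemma contDiff_softMax (β : ℝ) : ContDiff ℝ 1 (softMax β : (ι → ℝ) → ℝ) :=
  ((contDiff_partitionFunction β).log fun x ↦ (partitionFunction_pos β x).ne').div_const β

lemma contDiff_gibbsWeight (β : ℝ) (i : ι) : ContDiff ℝ 1 (gibbsWeight β i) :=
  ContDiff.div (by fun_prop) (contDiff_partitionFunction β) fun x ↦ (partitionFunction_pos β x).ne'

lemma gibbsWeight_nonneg (β : ℝ) (i : ι) (x : ι → ℝ) : 0 ≤ gibbsWeight β i x :=
  div_nonneg (exp_pos _).le (partitionFunction_pos β x).le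

lemma sum_gibbsWeight (β : ℝ) (x : ι → ℝ) : ∑ i, gibbsWeight β i x = 1 := by
  simp only [gibbsWeight, ← Finset.sum_div]
  exact div_self (partitionFunction_pos β x).ne'

lemma gibbsWeight_le_one (β : ℝ) (i : ι) (x : ι → ℝ) : gibbsWeight β i x ≤ 1 := by
  rw [← sum_gibbsWeight β x]
  exact Finset.single_le_sum (fun j _ ↦ gibbsWeight_nonneg β j x) (Finset.mem_univ i)

lemma abs_gibbsWeight_le_one (β : ℝ) (i : ι) (x : ι → ℝ) : |gibbsWeight β i x| ≤ 1 := by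
  simpa only [abs_of_nonneg (gibbsWeight_nonneg β i x)] using gibbsWeight_le_one β i x

lemma le_softMax {β : ℝ} (hβ : 0 < β) (x : ι → ℝ) (i : ι) : x i ≤ softMax β x := by
  rw [softMax, le_div_iff₀ hβ, le_log_iff_exp_le (partitionFunction_pos β x), mul_comm]
  exact Finset.single_le_sum (f := fun j ↦ exp (β * x j)) (fun _ _ ↦ (exp_pos _).le)
    (Finset.mem_univ i)

lemma iSup_le_softMax {β : ℝ} (hβ : 0 < β) (x : ι → ℝ) : ⨆ i, x i ≤ softMax β x :=
  ciSup_le (le_softMax hβ x)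

lemma softMax_le_iSup_add {β : ℝ} (hβ : 0 < β) (x : ι → ℝ) :
    softMax β x ≤ (⨆ i, x i) + log (Fintype.card ι) / β := by
  have hcard : (0 : ℝ) < Fintype.card ι := mod_cast Fintype.card_pos
  have hsum : partitionFunction β x ≤ Fintype.card ι * exp (β * ⨆ i, x i) := by
    rw [← nsmul_eq_mul]
    exact Finset.sum_le_card_nsmul _ _ _ fun i _ ↦ by
      gcongr
      exact le_ciSup (Set.finite_range x).bddAbove i
  rw [softMax, div_le_iff₀ hβ, add_mul, div_mul_cancel₀ _ hβ.ne',
    log_le_iff_le_exp (partitionFunction_pos β x), exp_add, exp_log hcard]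
  rwa [mul_comm, mul_comm _ β]

lemma fderiv_softMax_apply {β : ℝ} (hβ : β ≠ 0) (x v : ι → ℝ) :
    fderiv ℝ (softMax β) x v = ∑ i, gibbsWeight β i x * v i := by
  have hZ := (partitionFunction_pos β x).ne'
  have hdiff : DifferentiableAt ℝ (partitionFunction β) x :=
    (contDiff_partitionFunction β).differentiable one_ne_zero x
  unfold softMax
  simp only [div_eq_mul_inv]
  rw [fderiv_mul_const (hdiff.log hZ), fderiv.log hdiff hZ]
  simp only [smul_apply, smul_eq_mul, fderiv_partitionFunction_apply,
    gibbsWeight, div_mul_eq_mul_div, ← Finset.sum_div]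
  field_simp

lemma fderiv_gibbsWeight_apply (β : ℝ) (i : ι) (x v : ι → ℝ) :
    fderiv ℝ (gibbsWeight β i) x v =
      β * gibbsWeight β i x * (v i - ∑ j, gibbsWeight β j x * v j) := by
  have hZ := (partitionFunction_pos β x).ne'
  have hprod : (fun y : ι → ℝ ↦ exp (β * y i)) = gibbsWeight β i * partitionFunction β :=
    funext fun y ↦ (div_mul_cancel₀ _ (partitionFunction_pos β y).ne').symm
  have hderiv := fderiv_exp_mul_apply β i x v
  rw [hprod, fderiv_mul ((contDiff_gibbsWeight β i).differentiable one_ne_zero x)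
    ((contDiff_partitionFunction β).differentiable one_ne_zero x)] at hderiv
  simp only [add_apply, smul_apply, smul_eq_mul, fderiv_partitionFunction_apply] at hderiv
  refine mul_left_cancel₀ hZ ?_
  rw [eq_sub_of_add_eq' hderiv]
  simp only [gibbsWeight, div_mul_eq_mul_div, ← Finset.sum_div]
  field_simp

lemma abs_sum_gibbsWeight_mul_le (β : ℝ) (x v : ι → ℝ) :
    |∑ i, gibbsWeight β i x * v i| ≤ ‖v‖ := by
  calc |∑ i, gibbsWeight β i x * v i|
      ≤ ∑ i, gibbsWeight β i x * ‖v‖ := by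
        refine (Finset.abs_sum_le_sum_abs _ _).trans (Finset.sum_le_sum fun i _ ↦ ?_)
        rw [abs_mul, abs_of_nonneg (gibbsWeight_nonneg β i x)]
        exact mul_le_mul_of_nonneg_left (norm_le_pi_norm v i) (gibbsWeight_nonneg β i x)
    _ = ‖v‖ := by rw [← Finset.sum_mul, sum_gibbsWeight, one_mul]

lemma norm_fderiv_softMax_le {β : ℝ} (hβ : β ≠ 0) (x : ι → ℝ) : ‖fderiv ℝ (softMax β) x‖ ≤ 1 := by
  refine ContinuousLinearMap.opNorm_le_bound _ zero_le_one fun v ↦ ?_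
  rw [fderiv_softMax_apply hβ, one_mul]
  exact abs_sum_gibbsWeight_mul_le β x v

lemma norm_fderiv_gibbsWeight_le (β : ℝ) (i : ι) (x : ι → ℝ) :
    ‖fderiv ℝ (gibbsWeight β i) x‖ ≤ 2 * |β| := by
  refine ContinuousLinearMap.opNorm_le_bound _ (by positivity) fun v ↦ ?_
  have hdev : |v i - ∑ j, gibbsWeight β j x * v j| ≤ ‖v‖ + ‖v‖ :=
    (abs_sub _ _).trans (add_le_add (norm_le_pi_norm v i) (abs_sum_gibbsWeight_mul_le β x v))
  calc ‖fderiv ℝ (gibbsWeight β i) x v‖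
      = |β| * |gibbsWeight β i x| * |v i - ∑ j, gibbsWeight β j x * v j| := by
        rw [fderiv_gibbsWeight_apply, norm_eq_abs, abs_mul, abs_mul]
    _ ≤ |β| * 1 * (‖v‖ + ‖v‖) := by
        gcongr
        exact abs_gibbsWeight_le_one β i x
    _ = 2 * |β| * ‖v‖ := by ring

lemma sum_fderiv_gibbsWeight_apply (β : ℝ) (x : ι → ℝ) (C : ι → ι → ℝ) :
    ∑ i, fderiv ℝ (gibbsWeight β i) x (C i) =
      β / 2 * ∑ i, ∑ j, gibbsWeight β i x * gibbsWeight β j x * (C i i + C j j - 2 * C i j) := by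
  have hdiag : ∑ i, ∑ j, gibbsWeight β i x * gibbsWeight β j x * C i i =
      ∑ i, gibbsWeight β i x * C i i := by
    simp only [mul_right_comm, ← Finset.mul_sum, sum_gibbsWeight, mul_one]
  have hdiag' : ∑ i, ∑ j, gibbsWeight β i x * gibbsWeight β j x * C j j =
      ∑ i, gibbsWeight β i x * C i i := by
    simp only [mul_assoc, ← Finset.mul_sum, ← Finset.sum_mul, sum_gibbsWeight, one_mul]
  have hcross : ∑ i, ∑ j, gibbsWeight β i x * gibbsWeight β j x * (2 * C i j) =
      2 * ∑ i, gibbsWeight β i x * ∑ j, gibbsWeight β j x * C i j := by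
    simp only [Finset.mul_sum]
    exact Finset.sum_congr rfl fun i _ ↦ Finset.sum_congr rfl fun j _ ↦ by ring
  have hderiv : ∑ i, fderiv ℝ (gibbsWeight β i) x (C i) = β * (∑ i, gibbsWeight β i x * C i i -
      ∑ i, gibbsWeight β i x * ∑ j, gibbsWeight β j x * C i j) := by
    simp only [fderiv_gibbsWeight_apply, mul_sub, mul_assoc, Finset.sum_sub_distrib, Finset.mul_sum]
  simp only [mul_sub (_ * _), mul_add (_ * _), Finset.sum_sub_distrib, Finset.sum_add_distrib,
    hdiag, hdiag', hcross, hderiv]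
  ring

end SoftMax

section Stein

lemma hasDerivAt_gaussianPDFReal (m : ℝ) (v : ℝ≥0) (w : ℝ) :
    HasDerivAt (gaussianPDFReal m v) (-(w - m) / v * gaussianPDFReal m v w) w := by
  have hexponent : HasDerivAt (fun x : ℝ ↦ -(x - m) ^ 2 / (2 * v)) (-(w - m) / v) w := by
    refine ((((hasDerivAt_id w).sub_const m).pow 2).neg.div_const (2 * (v : ℝ))).congr_deriv ?_
    simp only [id, Nat.cast_ofNat, Nat.add_one_sub_one, pow_one, mul_one]
    rw [neg_mul_eq_mul_neg, mul_div_mul_left _ _ two_ne_zero]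
  refine (hexponent.exp.const_mul (√(2 * π * v))⁻¹).congr_deriv ?_
  rw [gaussianPDFReal]
  ring

lemma integrable_gaussianReal_iff {v : ℝ≥0} (hv : v ≠ 0) (m : ℝ) (f : ℝ → ℝ) :
    Integrable f (gaussianReal m v) ↔ Integrable fun w ↦ gaussianPDFReal m v w * f w := by
  rw [gaussianReal_of_var_ne_zero m hv, integrable_withDensity_iff_integrable_smul'
    (measurable_gaussianPDF m v) (ae_of_all _ fun _ ↦ gaussianPDF_lt_top)]
  simp only [toReal_gaussianPDF, smul_eq_mul]

theorem integral_mul_sub_gaussianReal {g : ℝ → ℝ} (hg : ContDiff ℝ 1 g) {A B : ℝ}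
    (hA : ∀ w, ‖g w‖ ≤ A) (hB : ∀ w, ‖deriv g w‖ ≤ B) (m : ℝ) (v : ℝ≥0) :
    ∫ w, g w * (w - m) ∂gaussianReal m v = v * ∫ w, deriv g w ∂gaussianReal m v := by
  rcases eq_or_ne v 0 with rfl | hv
  · simp
  have hgm : AEStronglyMeasurable g (gaussianReal m v) := hg.continuous.aestronglyMeasurable
  have hg' := hg.continuous_deriv_one
  have hid : Integrable (fun w ↦ w - m) (gaussianReal m v) :=
    ((memLp_id_gaussianReal 1).integrable le_rfl).sub (integrable_const m)
  have h_mul_id := (integrable_gaussianReal_iff hv m _).1 (hid.bdd_mul hgm (ae_of_all _ hA))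
  have h_deriv := (integrable_gaussianReal_iff hv m _).1
    (.of_bound hg'.aestronglyMeasurable B (ae_of_all _ hB))
  have h_self := (integrable_gaussianReal_iff hv m _).1 (.of_bound hgm A (ae_of_all _ hA))
  have hparts := integral_mul_deriv_eq_deriv_mul_of_integrable
    (fun w _ ↦ (hg.differentiable one_ne_zero w).hasDerivAt)
    (fun w _ ↦ hasDerivAt_gaussianPDFReal m v w)
    ((h_mul_id.neg.div_const v).congr
      (ae_of_all _ fun w ↦ by simp only [Pi.neg_apply, Pi.mul_apply]; ring))
    (h_deriv.congr (ae_of_all _ fun w ↦ mul_comm _ _))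
    (h_self.congr (ae_of_all _ fun w ↦ mul_comm _ _))
  simp only [integral_gaussianReal_eq_integral_smul hv, smul_eq_mul]
  calc ∫ w, gaussianPDFReal m v w * (g w * (w - m))
      = -v * ∫ w, g w * (-(w - m) / v * gaussianPDFReal m v w) := by
        rw [← integral_const_mul]
        congr 1 with w
        field_simp
    _ = v * ∫ w, gaussianPDFReal m v w * deriv g w := by
        rw [hparts, neg_mul_neg]
        simp only [mul_comm]

variable {Ω E : Type*} [MeasurableSpace Ω] {P : Measure Ω} [NormedAddCommGroup E]
  [NormedSpace ℝ E] [MeasurableSpace E] [BorelSpace E] [SecondCountableTopology E]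

lemma integral_comp_add_smul_mul_of_indepFun {ξ : Ω → ℝ} {W : Ω → E} {v : ℝ≥0}
    (hξ : HasLaw ξ (gaussianReal 0 v) P) (hW : AEMeasurable W P) (hindep : IndepFun ξ W P)
    {f : E → ℝ} (hf : ContDiff ℝ 1 f) {A B : ℝ} (hA : ∀ x, ‖f x‖ ≤ A)
    (hB : ∀ x, ‖fderiv ℝ f x‖ ≤ B) (u : E) :
    ∫ ω, f (W ω + ξ ω • u) * ξ ω ∂P = v * ∫ ω, fderiv ℝ f (W ω + ξ ω • u) u ∂P := by
  have hprob : IsProbabilityMeasure P := hξ.isProbabilityMeasure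
  have := Measure.isProbabilityMeasure_map hW
  have := hf.continuous_fderiv one_ne_zero
  have hderiv (w : E) (t : ℝ) :
      HasDerivAt (fun t : ℝ ↦ f (w + t • u)) (fderiv ℝ f (w + t • u) u) t :=
    (hf.differentiable one_ne_zero _).hasFDerivAt.comp_hasDerivAt t
      (by simpa using ((hasDerivAt_id t).smul_const u).const_add w)
  have hline (w : E) : ContDiff ℝ 1 fun t : ℝ ↦ f (w + t • u) := hf.comp (by fun_prop)
  have hbound (x : E) : ‖fderiv ℝ f x u‖ ≤ B * ‖u‖ := (fderiv ℝ f x).le_of_opNorm_le (hB x) u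
  have hlaw : P.map (fun ω ↦ (ξ ω, W ω)) = (gaussianReal 0 v).prod (P.map W) := by
    rw [(indepFun_iff_map_prod_eq_prod_map_map hξ.aemeasurable hW).1 hindep, hξ.map_eq]
  have hpair : AEMeasurable (fun ω ↦ (ξ ω, W ω)) P := hξ.aemeasurable.prodMk hW
  have htransfer {F : ℝ × E → ℝ} (hF : Continuous F) :
      ∫ ω, F (ξ ω, W ω) ∂P = ∫ q, F q ∂(gaussianReal 0 v).prod (P.map W) := by
    rw [← hlaw, integral_map hpair hF.aestronglyMeasurable]
  have hint : Integrable (fun q : ℝ × E ↦ f (q.2 + q.1 • u) * q.1)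
      ((gaussianReal 0 v).prod (P.map W)) :=
    (((memLp_id_gaussianReal 1).integrable le_rfl).comp_fst _).bdd_mul
      (by fun_prop) (ae_of_all _ fun q ↦ hA _)
  have hint' : Integrable (fun q : ℝ × E ↦ fderiv ℝ f (q.2 + q.1 • u) u)
      ((gaussianReal 0 v).prod (P.map W)) :=
    .of_bound (by fun_prop) _ (ae_of_all _ fun q ↦ hbound _)
  rw [htransfer (F := fun q ↦ f (q.2 + q.1 • u) * q.1) (by fun_prop),
    htransfer (F := fun q ↦ fderiv ℝ f (q.2 + q.1 • u) u) (by fun_prop),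
    integral_prod_symm _ hint, integral_prod_symm _ hint', ← integral_const_mul]
  refine integral_congr_ae (ae_of_all _ fun w ↦ ?_)
  simpa only [sub_zero, (hderiv w _).deriv] using
    integral_mul_sub_gaussianReal (hline w) (fun t ↦ hA _)
      (fun t ↦ by simpa only [(hderiv w t).deriv] using hbound _) 0 v

variable [CompleteSpace E]

lemma indepFun_sub_smul_of_covariance_eq {ξ : Ω → ℝ} {Z : Ω → E} {u : E}
    (h : HasGaussianLaw (fun ω ↦ (ξ ω, Z ω)) P)
    (hu : ∀ L : StrongDual ℝ E, cov[ξ, fun ω ↦ L (Z ω); P] = Var[ξ; P] * L u) :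
    IndepFun ξ (fun ω ↦ Z ω - ξ ω • u) P := by
  have hprob : IsProbabilityMeasure P := h.isProbabilityMeasure
  have hjoint : HasGaussianLaw (fun ω ↦ (ξ ω, Z ω - ξ ω • u)) P := by
    simpa using h.map_fun ((ContinuousLinearMap.fst ℝ ℝ E).prod
      (ContinuousLinearMap.snd ℝ ℝ E - (ContinuousLinearMap.fst ℝ ℝ E).smulRight u))
  refine hjoint.indepFun_of_covariance_strongDual fun c L ↦ ?_
  have hc : c ∘ ξ = fun ω ↦ c 1 * ξ ω := by
    ext ω
    simpa [mul_comm] using c.map_smul (ξ ω) 1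
  have hL : (L ∘ fun ω ↦ Z ω - ξ ω • u) = fun ω ↦ L (Z ω) - ξ ω * L u := by
    ext ω
    simp
  rw [hc, hL, covariance_const_mul_left, covariance_fun_sub_right h.fst.memLp_two
    (h.snd.map_fun L).memLp_two (h.fst.memLp_two.mul_const _), covariance_mul_const_right,
    covariance_self h.fst.aemeasurable, hu, sub_self, mul_zero]

theorem integral_comp_mul_eq_integral_fderiv {ξ : Ω → ℝ} {Z : Ω → E} {v : E}
    (h : HasGaussianLaw (fun ω ↦ (ξ ω, Z ω)) P) (hξ : P[ξ] = 0)
    (hv : ∀ L : StrongDual ℝ E, cov[ξ, fun ω ↦ L (Z ω); P] = L v)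
    {f : E → ℝ} (hf : ContDiff ℝ 1 f) {A B : ℝ} (hA : ∀ x, ‖f x‖ ≤ A)
    (hB : ∀ x, ‖fderiv ℝ f x‖ ≤ B) :
    ∫ ω, f (Z ω) * ξ ω ∂P = ∫ ω, fderiv ℝ f (Z ω) v ∂P := by
  have hprob : IsProbabilityMeasure P := h.isProbabilityMeasure
  rcases eq_or_ne Var[ξ; P] 0 with hs | hs
  · have hξ0 : ∀ᵐ ω ∂P, ξ ω = 0 := by
      simpa only [hξ] using ae_eq_integral_of_variance_eq_zero h.fst.memLp_two hs
    have hv0 : v = 0 := SeparatingDual.eq_zero_of_forall_dual_eq_zero (R := ℝ) fun L ↦ by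
      rw [← hv L, covariance, hξ]
      exact integral_eq_zero_of_ae (hξ0.mono fun ω hω ↦ by simp [hω])
    simpa [hv0] using integral_eq_zero_of_ae (hξ0.mono fun ω hω ↦ by simp [hω])
  -- Regress `Z` on `ξ`: the residual `Z - ξ • u` is uncorrelated with `ξ`, hence independent of it.
  set u := (Var[ξ; P])⁻¹ • v
  have hvu : v = Var[ξ; P] • u := (smul_inv_smul₀ hs v).symm
  have hindep : IndepFun ξ (fun ω ↦ Z ω - ξ ω • u) P :=
    indepFun_sub_smul_of_covariance_eq h fun L ↦ by rw [hv, hvu, map_smul, smul_eq_mul]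
  have hlaw : HasLaw ξ (gaussianReal 0 Var[ξ; P].toNNReal) P :=
    ⟨h.fst.aemeasurable, by rw [h.fst.map_eq_gaussianReal, hξ]⟩
  have hstein := integral_comp_add_smul_mul_of_indepFun hlaw
    (h.snd.aemeasurable.sub (h.fst.aemeasurable.smul_const u)) hindep hf hA hB u
  simp only [Pi.sub_apply, sub_add_cancel, Real.coe_toNNReal _ (variance_nonneg ξ P)] at hstein
  rw [hstein, ← integral_const_mul]
  simp only [hvu, map_smul, smul_eq_mul]

end Stein

section Rotation

variable {E : Type*} [NormedAddCommGroup E] [NormedSpace ℝ E] {f : E → ℝ} {C : ℝ}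

lemma norm_le_of_norm_fderiv_le (hf : Differentiable ℝ f) (hC : ∀ x, ‖fderiv ℝ f x‖ ≤ C) (x : E) :
    ‖f x‖ ≤ ‖f 0‖ + C * ‖x‖ := by
  have hlip := convex_univ.norm_image_sub_le_of_norm_fderiv_le (fun y _ ↦ hf y)
    (fun y _ ↦ hC y) (Set.mem_univ 0) (Set.mem_univ x)
  rw [sub_zero] at hlip
  linarith [norm_le_insert' (f x) (f 0)]

lemma norm_rotation_apply_le (θ : ℝ) (q : E × E) : ‖rot θ q‖ ≤ 2 * ‖q‖ := by
  have hsmul (c : ℝ) (hc : |c| ≤ 1) (x : E) (hx : ‖x‖ ≤ ‖q‖) : ‖c • x‖ ≤ ‖q‖ := by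
    rw [norm_smul, norm_eq_abs]
    exact (mul_le_of_le_one_left (norm_nonneg x) hc).trans hx
  have hsin : |-sin θ| ≤ 1 := (abs_neg _).trans_le (abs_sin_le_one θ)
  rw [ContinuousLinearMap.rotation_apply, two_mul]
  exact max_le
    (norm_add_le_of_le (hsmul _ (abs_cos_le_one θ) _ (norm_fst_le q))
      (hsmul _ (abs_sin_le_one θ) _ (norm_snd_le q)))
    (norm_add_le_of_le (hsmul _ hsin _ (norm_fst_le q))
      (hsmul _ (abs_cos_le_one θ) _ (norm_snd_le q)))

lemma hasDerivAt_comp_rotation_fst (hf : Differentiable ℝ f) (q : E × E) (θ : ℝ) :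
    HasDerivAt (fun θ ↦ f (rot θ q).1) (fderiv ℝ f (rot θ q).1 (rot θ q).2) θ := by
  simp only [ContinuousLinearMap.rotation_apply]
  exact (hf _).hasFDerivAt.comp_hasDerivAt θ
    (((hasDerivAt_cos θ).smul_const q.1).add ((hasDerivAt_sin θ).smul_const q.2))

lemma norm_fderiv_rotation_le (hC : ∀ x, ‖fderiv ℝ f x‖ ≤ C) (q : E × E) (θ : ℝ) :
    ‖fderiv ℝ f (rot θ q).1 (rot θ q).2‖ ≤ C * (2 * ‖q‖) :=
  (fderiv ℝ f _).le_of_opNorm_le_of_le (hC _) ((norm_snd_le _).trans (norm_rotation_apply_le θ q))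

variable [MeasurableSpace E]

lemma integral_comp_rotation_zero_fst (μ ν : Measure E) [IsProbabilityMeasure μ]
    [IsProbabilityMeasure ν] :
    ∫ q, f (rot 0 q).1 ∂μ.prod ν = ∫ x, f x ∂μ := by
  simp only [ContinuousLinearMap.rotation_apply, cos_zero, sin_zero, one_smul, zero_smul, add_zero]
  simpa using integral_fun_fst (μ := μ) (ν := ν) f

lemma integral_comp_rotation_pi_div_two_fst (μ ν : Measure E) [IsProbabilityMeasure μ]
    [IsProbabilityMeasure ν] :
    ∫ q, f (rot (π / 2) q).1 ∂μ.prod ν = ∫ y, f y ∂ν := by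
  simp only [ContinuousLinearMap.rotation_apply, cos_pi_div_two, sin_pi_div_two, one_smul,
    zero_smul, zero_add]
  simpa using integral_fun_snd (μ := μ) (ν := ν) f

variable [BorelSpace E]

lemma integrable_of_norm_fderiv_le {μ : Measure E} [IsFiniteMeasure μ] (hμ : Integrable id μ)
    (hf : Differentiable ℝ f) (hC : ∀ x, ‖fderiv ℝ f x‖ ≤ C) : Integrable f μ :=
  ((integrable_const ‖f 0‖).add (hμ.norm.const_mul C)).mono'
    hf.continuous.aestronglyMeasurable (ae_of_all _ (norm_le_of_norm_fderiv_le hf hC))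

variable [SecondCountableTopology E]

lemma hasDerivAt_integral_comp_rotation_fst {Q : Measure (E × E)} [IsFiniteMeasure Q]
    (hQ : Integrable id Q) (hf : ContDiff ℝ 1 f) (hC : ∀ x, ‖fderiv ℝ f x‖ ≤ C) (θ : ℝ) :
    HasDerivAt (fun θ ↦ ∫ q, f (rot θ q).1 ∂Q)
      (∫ q, fderiv ℝ f (rot θ q).1 (rot θ q).2 ∂Q) θ := by
  have hdiff := hf.differentiable one_ne_zero
  have := hf.continuous_fderiv one_ne_zero
  have hint : Integrable (fun q ↦ f (rot θ q).1) Q := by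
    have hfst : Integrable (fun q ↦ (rot θ q).1) Q :=
      ((ContinuousLinearMap.fst ℝ E E).comp (rot θ)).integrable_comp hQ
    refine ((integrable_const ‖f 0‖).add (hfst.norm.const_mul C)).mono' (by fun_prop)
      (ae_of_all _ fun q ↦ norm_le_of_norm_fderiv_le hdiff hC _)
  exact (hasDerivAt_integral_of_dominated_loc_of_deriv_le (bound := fun q ↦ C * (2 * ‖q‖))
    Filter.univ_mem (.of_forall fun _ ↦ by fun_prop) hint (by fun_prop)
    (ae_of_all _ fun q θ _ ↦ norm_fderiv_rotation_le hC q θ)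
    ((hQ.norm.const_mul 2).const_mul C)
    (ae_of_all _ fun q θ _ ↦ hasDerivAt_comp_rotation_fst hdiff q θ)).2

end Rotation

section Comparison

lemma exists_strongDual_pi_apply_eq_sum {ι : Type*} [Fintype ι]
    (L : StrongDual ℝ (ι → ℝ)) : ∃ a : ι → ℝ, ∀ x, L x = ∑ i, a i * x i := by
  classical
  exact ⟨fun i ↦ L fun j ↦ if i = j then 1 else 0, fun x ↦
    (LinearMap.pi_apply_eq_sum_univ (L : (ι → ℝ) →ₗ[ℝ] ℝ) x).trans
      (Finset.sum_congr rfl fun i _ ↦ mul_comm _ _)⟩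

lemma covariance_strongDual_right {ι Ω : Type*} [Finite ι] [MeasurableSpace Ω]
    {P : Measure Ω} [IsFiniteMeasure P] {ξ : Ω → ℝ} {Z : Ω → ι → ℝ} (hξ : MemLp ξ 2 P)
    (hZ : ∀ i, MemLp (fun ω ↦ Z ω i) 2 P) (L : StrongDual ℝ (ι → ℝ)) :
    cov[ξ, fun ω ↦ L (Z ω); P] = L fun i ↦ cov[ξ, fun ω ↦ Z ω i; P] := by
  cases nonempty_fintype ι
  obtain ⟨a, ha⟩ := exists_strongDual_pi_apply_eq_sum L
  simp only [ha]
  rw [covariance_fun_sum_right (fun i ↦ (hZ i).const_mul (a i)) hξ]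
  simp only [covariance_const_mul_right]

variable {ι : Type*} [Fintype ι]

/-- The entries `Cov_ν(y i, y j) - Cov_μ(x i, x j)` of the difference of two covariance matrices,
which drive the derivative of the rotation interpolation from `μ` to `ν`. -/
noncomputable def covarianceGap (μ ν : Measure (ι → ℝ)) (i j : ι) : ℝ :=
  cov[fun y ↦ y i, fun y ↦ y j; ν] - cov[fun x ↦ x i, fun x ↦ x j; μ]

variable {μ ν : Measure (ι → ℝ)} [IsGaussian μ] [IsGaussian ν]

lemma covariance_rotation (θ : ℝ) (i j : ι) :
    cov[fun q : (ι → ℝ) × (ι → ℝ) ↦ (rot θ q).2 i,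
        fun q : (ι → ℝ) × (ι → ℝ) ↦ (rot θ q).1 j; μ.prod ν] =
      sin θ * cos θ * covarianceGap μ ν i j := by
  have hμ (k : ι) : MemLp (fun x : ι → ℝ ↦ x k) 2 μ :=
    (IsGaussian.hasGaussianLaw_id.eval k).memLp_two
  have hν (k : ι) : MemLp (fun y : ι → ℝ ↦ y k) 2 ν :=
    (IsGaussian.hasGaussianLaw_id.eval k).memLp_two
  have hfst (k : ι) : MemLp (fun q : (ι → ℝ) × (ι → ℝ) ↦ q.1 k) 2 (μ.prod ν) := (hμ k).comp_fst ν
  have hsnd (k : ι) : MemLp (fun q : (ι → ℝ) × (ι → ℝ) ↦ q.2 k) 2 (μ.prod ν) := (hν k).comp_snd μ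
  have hfst_fst : cov[fun q ↦ q.1 i, fun q ↦ q.1 j; μ.prod ν] =
      cov[fun x ↦ x i, fun x ↦ x j; μ] :=
    measurePreserving_fst.hasLaw.covariance_fun_comp (hμ i).aemeasurable (hμ j).aemeasurable
  have hsnd_snd : cov[fun q ↦ q.2 i, fun q ↦ q.2 j; μ.prod ν] =
      cov[fun y ↦ y i, fun y ↦ y j; ν] :=
    measurePreserving_snd.hasLaw.covariance_fun_comp (hν i).aemeasurable (hν j).aemeasurable
  have hfst_snd (k l : ι) : cov[fun q ↦ q.1 k, fun q ↦ q.2 l; μ.prod ν] = 0 :=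
    covariance_fst_snd_prod (hμ k) (hν l)
  simp only [ContinuousLinearMap.rotation_apply, Pi.add_apply, Pi.smul_apply, smul_eq_mul]
  change cov[(fun q ↦ -sin θ * q.1 i) + fun q ↦ cos θ * q.2 i,
    (fun q ↦ cos θ * q.1 j) + fun q ↦ sin θ * q.2 j; μ.prod ν] = _
  rw [covariance_add_left ((hfst i).const_mul _) ((hsnd i).const_mul _)
      (((hfst j).const_mul _).add ((hsnd j).const_mul _)),
    covariance_add_right ((hfst i).const_mul _) ((hfst j).const_mul _) ((hsnd j).const_mul _),
    covariance_add_right ((hsnd i).const_mul _) ((hfst j).const_mul _) ((hsnd j).const_mul _)]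
  simp only [covariance_const_mul_left, covariance_const_mul_right, hfst_fst, hsnd_snd, hfst_snd,
    covariance_comm (fun q : (ι → ℝ) × (ι → ℝ) ↦ q.2 i) fun q ↦ q.1 j, covarianceGap]
  ring

lemma hasGaussianLaw_rotation (θ : ℝ) :
    HasGaussianLaw (fun q : (ι → ℝ) × (ι → ℝ) ↦ rot θ q) (μ.prod ν) :=
  IsGaussian.hasGaussianLaw

lemma integral_rotation_snd_eq_zero (hμ : ∀ i, ∫ x, x i ∂μ = 0) (hν : ∀ i, ∫ y, y i ∂ν = 0)
    (θ : ℝ) (i : ι) : ∫ q, (rot θ q).2 i ∂μ.prod ν = 0 := by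
  have hfst : Integrable (fun q : (ι → ℝ) × (ι → ℝ) ↦ q.1 i) (μ.prod ν) :=
    (IsGaussian.hasGaussianLaw_id.eval i).integrable.comp_fst ν
  have hsnd : Integrable (fun q : (ι → ℝ) × (ι → ℝ) ↦ q.2 i) (μ.prod ν) :=
    (IsGaussian.hasGaussianLaw_id.eval i).integrable.comp_snd μ
  simp only [ContinuousLinearMap.rotation_apply, Pi.add_apply, Pi.smul_apply, smul_eq_mul]
  rw [integral_add (hfst.const_mul _) (hsnd.const_mul _), integral_const_mul, integral_const_mul,
    integral_fun_fst fun x : ι → ℝ ↦ x i, integral_fun_snd fun y : ι → ℝ ↦ y i, hμ, hν]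
  simp only [smul_zero, mul_zero, add_zero]

lemma integral_mul_rotation_snd (hμ : ∀ i, ∫ x, x i ∂μ = 0) (hν : ∀ i, ∫ y, y i ∂ν = 0)
    {g : (ι → ℝ) → ℝ} (hg : ContDiff ℝ 1 g) {A B : ℝ} (hA : ∀ x, ‖g x‖ ≤ A)
    (hB : ∀ x, ‖fderiv ℝ g x‖ ≤ B) (θ : ℝ) (i : ι) :
    ∫ q, g (rot θ q).1 * (rot θ q).2 i ∂μ.prod ν =
      sin θ * cos θ * ∫ q, fderiv ℝ g (rot θ q).1 (covarianceGap μ ν i) ∂μ.prod ν := by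
  have hrot := hasGaussianLaw_rotation (μ := μ) (ν := ν) θ
  have hjoint : HasGaussianLaw (fun q : (ι → ℝ) × (ι → ℝ) ↦ ((rot θ q).2 i, (rot θ q).1))
      (μ.prod ν) :=
    hrot.map_fun (((ContinuousLinearMap.proj i).comp (.snd ℝ (ι → ℝ) (ι → ℝ))).prod (.fst ℝ _ _))
  have hcov (L : StrongDual ℝ (ι → ℝ)) : cov[fun q : (ι → ℝ) × (ι → ℝ) ↦ (rot θ q).2 i,
      fun q ↦ L (rot θ q).1; μ.prod ν] = L ((sin θ * cos θ) • covarianceGap μ ν i) := by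
    refine (covariance_strongDual_right (hrot.snd.eval i).memLp_two
      (fun j ↦ (hrot.fst.eval j).memLp_two) L).trans ?_
    exact congrArg L (funext fun j ↦ covariance_rotation θ i j)
  refine (integral_comp_mul_eq_integral_fderiv hjoint (integral_rotation_snd_eq_zero hμ hν θ i)
    hcov hg hA hB).trans ?_
  simp only [map_smul, smul_eq_mul, integral_const_mul]

variable {f : (ι → ℝ) → ℝ} {g : ι → (ι → ℝ) → ℝ} {B C : ℝ}

theorem hasDerivAt_integral_comp_rotation_fst_of_isGaussian (hμ : ∀ i, ∫ x, x i ∂μ = 0)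
    (hν : ∀ i, ∫ y, y i ∂ν = 0) (hf : ContDiff ℝ 1 f) (hg : ∀ i, ContDiff ℝ 1 (g i))
    (hfg : ∀ x v, fderiv ℝ f x v = ∑ i, g i x * v i) (hC : ∀ x, ‖fderiv ℝ f x‖ ≤ C)
    (hB : ∀ i x, ‖fderiv ℝ (g i) x‖ ≤ B) (θ : ℝ) :
    HasDerivAt (fun θ ↦ ∫ q, f (rot θ q).1 ∂μ.prod ν)
      (sin θ * cos θ * ∫ q, ∑ i, fderiv ℝ (g i) (rot θ q).1 (covarianceGap μ ν i) ∂μ.prod ν) θ := by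
  classical
  have hQ : Integrable id (μ.prod ν) := (IsGaussian.memLp_id _ 1 (by simp)).integrable le_rfl
  have hA (i : ι) (x : ι → ℝ) : ‖g i x‖ ≤ C := by
    simpa [hfg, Pi.single_apply, Pi.norm_single] using
      (fderiv ℝ f x).le_of_opNorm_le (hC x) (Pi.single i 1)
  have hrot := hasGaussianLaw_rotation (μ := μ) (ν := ν) θ
  refine (hasDerivAt_integral_comp_rotation_fst hQ hf hC θ).congr_deriv ?_
  simp only [hfg]
  rw [integral_finsetSum _ fun i _ ↦ ?_, integral_finsetSum _ fun i _ ↦ ?_, Finset.mul_sum]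
  · exact Finset.sum_congr rfl fun i _ ↦
      integral_mul_rotation_snd hμ hν (hg i) (hA i) (hB i) θ i
  · have := (hg i).continuous_fderiv one_ne_zero
    exact .of_bound (by fun_prop) (B * ‖covarianceGap μ ν i‖)
      (ae_of_all _ fun q ↦ (fderiv ℝ (g i) _).le_of_opNorm_le (hB i _) _)
  · have hgc := (hg i).continuous
    exact (hrot.snd.eval i).integrable.bdd_mul (by fun_prop) (ae_of_all _ fun q ↦ hA i _)

theorem integral_le_integral_of_sum_fderiv_covarianceGap_nonpos (hμ : ∀ i, ∫ x, x i ∂μ = 0)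
    (hν : ∀ i, ∫ y, y i ∂ν = 0) (hf : ContDiff ℝ 1 f) (hg : ∀ i, ContDiff ℝ 1 (g i))
    (hfg : ∀ x v, fderiv ℝ f x v = ∑ i, g i x * v i) (hC : ∀ x, ‖fderiv ℝ f x‖ ≤ C)
    (hB : ∀ i x, ‖fderiv ℝ (g i) x‖ ≤ B)
    (hle : ∀ x, ∑ i, fderiv ℝ (g i) x (covarianceGap μ ν i) ≤ 0) :
    ∫ y, f y ∂ν ≤ ∫ x, f x ∂μ := by
  have hderiv := hasDerivAt_integral_comp_rotation_fst_of_isGaussian hμ hν hf hg hfg hC hB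
  have hanti : AntitoneOn (fun θ ↦ ∫ q, f (rot θ q).1 ∂μ.prod ν)
      (Set.Icc 0 (π / 2)) := by
    refine antitoneOn_of_deriv_nonpos (convex_Icc _ _)
      (fun θ _ ↦ (hderiv θ).continuousAt.continuousWithinAt)
      (fun θ _ ↦ (hderiv θ).differentiableAt.differentiableWithinAt) fun θ hθ ↦ ?_
    rw [interior_Icc] at hθ
    rw [(hderiv θ).deriv]
    have hsin : 0 ≤ sin θ := sin_nonneg_of_nonneg_of_le_pi hθ.1.le (by linarith [hθ.2, pi_pos])
    have hcos : 0 ≤ cos θ := cos_nonneg_of_mem_Icc ⟨by linarith [hθ.1, pi_pos], hθ.2.le⟩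
    exact mul_nonpos_of_nonneg_of_nonpos (mul_nonneg hsin hcos) (integral_nonpos fun q ↦ hle _)
  have hpi : (0 : ℝ) ≤ π / 2 := by positivity
  simpa only [integral_comp_rotation_zero_fst, integral_comp_rotation_pi_div_two_fst] using
    hanti (Set.left_mem_Icc.2 hpi) (Set.right_mem_Icc.2 hpi) hpi

end Comparison

section SudakovFernique

lemma le_of_forall_le_add_div {a b c : ℝ} (h : ∀ β > 0, a ≤ b + c / β) : a ≤ b := by
  have hlim : Filter.Tendsto (fun β : ℝ ↦ b + c / β) Filter.atTop (nhds (b + 0)) :=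
    tendsto_const_nhds.add (tendsto_const_nhds.div_atTop Filter.tendsto_id)
  rw [add_zero] at hlim
  exact ge_of_tendsto hlim ((Filter.eventually_gt_atTop 0).mono h)

lemma covarianceGap_self_add_self_sub {ι : Type*} {μ ν : Measure (ι → ℝ)} [IsGaussian μ]
    [IsGaussian ν] (i j : ι) :
    covarianceGap μ ν i i + covarianceGap μ ν j j - 2 * covarianceGap μ ν i j =
      Var[fun y ↦ y i - y j; ν] - Var[fun x ↦ x i - x j; μ] := by
  have hμ (k : ι) : MemLp (fun x : ι → ℝ ↦ x k) 2 μ :=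
    (IsGaussian.hasGaussianLaw_id.eval k).memLp_two
  have hν (k : ι) : MemLp (fun y : ι → ℝ ↦ y k) 2 ν :=
    (IsGaussian.hasGaussianLaw_id.eval k).memLp_two
  simp only [covarianceGap, variance_fun_sub (hμ i) (hμ j), variance_fun_sub (hν i) (hν j),
    covariance_self (hμ _).aemeasurable, covariance_self (hν _).aemeasurable]
  ring

section

variable {ι : Type*} [Fintype ι] [Nonempty ι]

lemma abs_iSup_le_norm (x : ι → ℝ) : |⨆ i, x i| ≤ ‖x‖ := by
  obtain ⟨i, hi⟩ := exists_eq_ciSup_of_finite (f := x)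
  rw [← hi]
  exact norm_le_pi_norm x i

lemma integrable_iSup {μ : Measure (ι → ℝ)} (hμ : Integrable id μ) :
    Integrable (fun x ↦ ⨆ i, x i) μ :=
  hμ.mono (Measurable.iSup measurable_pi_apply).aestronglyMeasurable (ae_of_all _ abs_iSup_le_norm)

lemma integrable_softMax {μ : Measure (ι → ℝ)} [IsFiniteMeasure μ] (hμ : Integrable id μ) {β : ℝ}
    (hβ : β ≠ 0) : Integrable (softMax β) μ :=
  integrable_of_norm_fderiv_le hμ ((contDiff_softMax β).differentiable one_ne_zero)
    (norm_fderiv_softMax_le hβ)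

variable {μ ν : Measure (ι → ℝ)} [IsGaussian μ] [IsGaussian ν]

lemma integral_softMax_le_of_variance_sub_le (hμ : ∀ i, ∫ x, x i ∂μ = 0)
    (hν : ∀ i, ∫ y, y i ∂ν = 0)
    (hvar : ∀ i j, Var[fun y ↦ y i - y j; ν] ≤ Var[fun x ↦ x i - x j; μ]) {β : ℝ} (hβ : 0 < β) :
    ∫ y, softMax β y ∂ν ≤ ∫ x, softMax β x ∂μ := by
  refine integral_le_integral_of_sum_fderiv_covarianceGap_nonpos hμ hν (contDiff_softMax β)
    (contDiff_gibbsWeight β) (fderiv_softMax_apply hβ.ne') (norm_fderiv_softMax_le hβ.ne')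
    (norm_fderiv_gibbsWeight_le β) fun x ↦ ?_
  rw [sum_fderiv_gibbsWeight_apply]
  refine mul_nonpos_of_nonneg_of_nonpos (by positivity) (Finset.sum_nonpos fun i _ ↦
    Finset.sum_nonpos fun j _ ↦ mul_nonpos_of_nonneg_of_nonpos
      (mul_nonneg (gibbsWeight_nonneg β i x) (gibbsWeight_nonneg β j x)) ?_)
  rw [covarianceGap_self_add_self_sub]
  exact sub_nonpos.2 (hvar i j)

end

theorem integral_iSup_le_of_variance_sub_le {ι : Type*} [Finite ι] [Nonempty ι]
    {μ ν : Measure (ι → ℝ)} [IsGaussian μ] [IsGaussian ν] (hμ : ∀ i, ∫ x, x i ∂μ = 0)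
    (hν : ∀ i, ∫ y, y i ∂ν = 0)
    (hvar : ∀ i j, Var[fun y ↦ y i - y j; ν] ≤ Var[fun x ↦ x i - x j; μ]) :
    ∫ y, ⨆ i, y i ∂ν ≤ ∫ x, ⨆ i, x i ∂μ := by
  cases nonempty_fintype ι
  have hμi : Integrable id μ := (IsGaussian.memLp_id μ 1 (by simp)).integrable le_rfl
  have hνi : Integrable id ν := (IsGaussian.memLp_id ν 1 (by simp)).integrable le_rfl
  refine le_of_forall_le_add_div (c := log (Fintype.card ι)) fun β hβ ↦ ?_
  calc ∫ y, ⨆ i, y i ∂ν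
      ≤ ∫ y, softMax β y ∂ν := integral_mono (integrable_iSup hνi) (integrable_softMax hνi hβ.ne')
        (iSup_le_softMax hβ)
    _ ≤ ∫ x, softMax β x ∂μ := integral_softMax_le_of_variance_sub_le hμ hν hvar hβ
    _ ≤ ∫ x, ((⨆ i, x i) + log (Fintype.card ι) / β) ∂μ :=
        integral_mono (integrable_softMax hμi hβ.ne')
          ((integrable_iSup hμi).add (integrable_const _)) (softMax_le_iSup_add hβ)
    _ = ∫ x, ⨆ i, x i ∂μ + log (Fintype.card ι) / β := by
        rw [integral_add (integrable_iSup hμi) (integrable_const _), integral_const, probReal_univ,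
          one_smul]

end SudakovFernique

section MaureyPisier

variable {E : Type*} [NormedAddCommGroup E] [NormedSpace ℝ E] {f : E → ℝ} {C : ℝ}

lemma abs_sub_le_integral_abs_fderiv_rotation (hf : ContDiff ℝ 1 f) (q : E × E) :
    |f q.2 - f q.1| ≤ ∫ θ in Set.Ioc 0 (π / 2), |fderiv ℝ f (rot θ q).1 (rot θ q).2| := by
  have hpi : (0 : ℝ) ≤ π / 2 := by positivity
  have hcont : Continuous fun θ ↦ fderiv ℝ f (rot θ q).1 (rot θ q).2 := by
    have := hf.continuous_fderiv one_ne_zero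
    simp only [ContinuousLinearMap.rotation_apply]
    fun_prop
  have hFTC := intervalIntegral.integral_eq_sub_of_hasDerivAt
    (fun θ _ ↦ hasDerivAt_comp_rotation_fst (hf.differentiable one_ne_zero) q θ)
    (hcont.intervalIntegrable 0 (π / 2))
  have hzero : (rot 0 q).1 = q.1 := by simp [ContinuousLinearMap.rotation_apply]
  have hpi_div_two : (rot (π / 2) q).1 = q.2 := by simp [ContinuousLinearMap.rotation_apply]
  rw [hzero, hpi_div_two] at hFTC
  rw [← hFTC, ← intervalIntegral.integral_of_le hpi]
  exact intervalIntegral.abs_integral_le_integral_abs hpi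

variable [MeasurableSpace E] [BorelSpace E] [SecondCountableTopology E] [CompleteSpace E]
  {μ : Measure E} [IsGaussian μ]

lemma integrable_fderiv_rotation (hf : ContDiff ℝ 1 f) (hC : ∀ x, ‖fderiv ℝ f x‖ ≤ C)
    (I : Measure ℝ) [IsFiniteMeasure I] :
    Integrable (fun r : (E × E) × ℝ ↦ fderiv ℝ f (rot r.2 r.1).1 (rot r.2 r.1).2)
      ((μ.prod μ).prod I) := by
  have hQ : Integrable id (μ.prod μ) := (IsGaussian.memLp_id _ 1 (by simp)).integrable le_rfl
  have hcont : Continuous fun r : (E × E) × ℝ ↦ fderiv ℝ f (rot r.2 r.1).1 (rot r.2 r.1).2 := by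
    have := hf.continuous_fderiv one_ne_zero
    simp only [ContinuousLinearMap.rotation_apply]
    fun_prop
  exact (((hQ.norm.const_mul 2).const_mul C).comp_fst I).mono' hcont.aestronglyMeasurable
    (ae_of_all _ fun r ↦ norm_fderiv_rotation_le hC r.1 r.2)

lemma integral_comp_rotation (hμ : μ[id] = 0) {h : E × E → ℝ} (hh : Continuous h) (θ : ℝ) :
    ∫ q, h (rot θ q) ∂μ.prod μ = ∫ q, h q ∂μ.prod μ := by
  conv_rhs => rw [← IsGaussian.map_rotation_eq_self hμ θ]
  exact (integral_map (by fun_prop) hh.aestronglyMeasurable).symm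

theorem integral_abs_sub_le_integral_abs_fderiv (hμ : μ[id] = 0) (hf : ContDiff ℝ 1 f)
    (hC : ∀ x, ‖fderiv ℝ f x‖ ≤ C) :
    ∫ q, |f q.2 - f q.1| ∂μ.prod μ ≤ π / 2 * ∫ q, |fderiv ℝ f q.1 q.2| ∂μ.prod μ := by
  have := hf.continuous_fderiv one_ne_zero
  have hint := (integrable_fderiv_rotation (μ := μ) hf hC
    (volume.restrict (Set.Ioc 0 (π / 2)))).abs
  calc ∫ q, |f q.2 - f q.1| ∂μ.prod μ
      ≤ ∫ q, (∫ θ in Set.Ioc 0 (π / 2), |fderiv ℝ f (rot θ q).1 (rot θ q).2|) ∂μ.prod μ :=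
        integral_mono_of_nonneg (ae_of_all _ fun _ ↦ abs_nonneg _) hint.integral_prod_left
          (ae_of_all _ (abs_sub_le_integral_abs_fderiv_rotation hf))
    _ = ∫ θ in Set.Ioc 0 (π / 2), ∫ q, |fderiv ℝ f (rot θ q).1 (rot θ q).2| ∂μ.prod μ :=
        integral_integral_swap hint
    _ = ∫ _ in Set.Ioc 0 (π / 2), ∫ q, |fderiv ℝ f q.1 q.2| ∂μ.prod μ :=
        integral_congr_ae (ae_of_all _ (integral_comp_rotation hμ
          (h := fun q ↦ |fderiv ℝ f q.1 q.2|) (by fun_prop)))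
    _ = π / 2 * ∫ q, |fderiv ℝ f q.1 q.2| ∂μ.prod μ := by
        rw [setIntegral_const, volume_real_Ioc_of_le (by positivity), sub_zero, smul_eq_mul]

end MaureyPisier

section Concentration

section

variable {ι : Type*} [Fintype ι] [Nonempty ι] {μ : Measure (ι → ℝ)} {σ : ℝ}

lemma integral_abs_sum_gibbsWeight_mul_le [IsProbabilityMeasure μ] (β : ℝ)
    (hint : ∀ i, Integrable (fun y ↦ y i) μ) (hσ : ∀ i, ∫ y, |y i| ∂μ ≤ σ) :
    ∫ q, |∑ i, gibbsWeight β i q.1 * q.2 i| ∂μ.prod μ ≤ σ := by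
  have hweight (i : ι) : Integrable (gibbsWeight β i) μ :=
    .of_bound (contDiff_gibbsWeight β i).continuous.aestronglyMeasurable 1
      (ae_of_all _ (abs_gibbsWeight_le_one β i))
  have hprod (i : ι) : Integrable (fun q : (ι → ℝ) × (ι → ℝ) ↦ gibbsWeight β i q.1 * |q.2 i|)
      (μ.prod μ) := (hweight i).mul_prod (hint i).abs
  calc ∫ q, |∑ i, gibbsWeight β i q.1 * q.2 i| ∂μ.prod μ
      ≤ ∫ q, ∑ i, gibbsWeight β i q.1 * |q.2 i| ∂μ.prod μ := by
        refine integral_mono_of_nonneg (ae_of_all _ fun q ↦ abs_nonneg _)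
          (integrable_finsetSum _ fun i _ ↦ hprod i) (ae_of_all _ fun q ↦ ?_)
        refine (Finset.abs_sum_le_sum_abs _ _).trans_eq (Finset.sum_congr rfl fun i _ ↦ ?_)
        rw [abs_mul, abs_of_nonneg (gibbsWeight_nonneg β i q.1)]
    _ = ∑ i, (∫ x, gibbsWeight β i x ∂μ) * ∫ y, |y i| ∂μ := by
        rw [integral_finsetSum _ fun i _ ↦ hprod i]
        exact Finset.sum_congr rfl fun i _ ↦
          integral_prod_mul (gibbsWeight β i) fun y : ι → ℝ ↦ |y i|
    _ ≤ ∑ i, (∫ x, gibbsWeight β i x ∂μ) * σ := by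
        gcongr with i
        · exact integral_nonneg (gibbsWeight_nonneg β i)
        · exact hσ i
    _ = σ := by
        rw [← Finset.sum_mul, ← integral_finsetSum _ fun i _ ↦ hweight i]
        simp only [sum_gibbsWeight, integral_const, probReal_univ, one_smul, one_mul]

lemma abs_iSup_sub_iSup_le_abs_softMax_sub_add {β : ℝ} (hβ : 0 < β) (x y : ι → ℝ) :
    |(⨆ i, y i) - ⨆ i, x i| ≤ |softMax β y - softMax β x| + log (Fintype.card ι) / β := by
  have hx := iSup_le_softMax hβ x
  have hy := iSup_le_softMax hβ y
  have hx' := softMax_le_iSup_add hβ x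
  have hy' := softMax_le_iSup_add hβ y
  rcases abs_cases (softMax β y - softMax β x) with h | h <;> rw [abs_le] <;>
    constructor <;> linarith

end

theorem integral_abs_iSup_sub_iSup_le {ι : Type*} [Finite ι] [Nonempty ι] {μ : Measure (ι → ℝ)}
    [IsGaussian μ] (hμ : ∀ i, ∫ x, x i ∂μ = 0) {σ : ℝ} (hσ : ∀ i, ∫ x, |x i| ∂μ ≤ σ) :
    ∫ q, |(⨆ i, q.2 i) - ⨆ i, q.1 i| ∂μ.prod μ ≤ π / 2 * σ := by
  cases nonempty_fintype ι
  have hid : Integrable id μ := (IsGaussian.memLp_id μ 1 (by simp)).integrable le_rfl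
  have hcenter : μ[id] = 0 := by
    ext i
    exact (eval_integral (fun j ↦ (IsGaussian.hasGaussianLaw_id.eval j).integrable) i).trans (hμ i)
  refine le_of_forall_le_add_div (c := log (Fintype.card ι)) fun β hβ ↦ ?_
  have hsoft := integrable_softMax hid hβ.ne'
  have hdiff : Integrable (fun q ↦ |softMax β q.2 - softMax β q.1|) (μ.prod μ) :=
    ((hsoft.comp_snd μ).sub (hsoft.comp_fst μ)).abs
  calc ∫ q, |(⨆ i, q.2 i) - ⨆ i, q.1 i| ∂μ.prod μ
      ≤ ∫ q, (|softMax β q.2 - softMax β q.1| + log (Fintype.card ι) / β) ∂μ.prod μ :=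
        integral_mono_of_nonneg (ae_of_all _ fun _ ↦ abs_nonneg _)
          (hdiff.add (integrable_const _))
          (ae_of_all _ fun q ↦ abs_iSup_sub_iSup_le_abs_softMax_sub_add hβ q.1 q.2)
    _ = ∫ q, |softMax β q.2 - softMax β q.1| ∂μ.prod μ + log (Fintype.card ι) / β := by
        rw [integral_add hdiff (integrable_const _), integral_const, probReal_univ, one_smul]
    _ ≤ π / 2 * ∫ q, |fderiv ℝ (softMax β) q.1 q.2| ∂μ.prod μ + log (Fintype.card ι) / β := by
        gcongr
        exact integral_abs_sub_le_integral_abs_fderiv hcenter (contDiff_softMax β)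
          (norm_fderiv_softMax_le hβ.ne')
    _ ≤ π / 2 * σ + log (Fintype.card ι) / β := by
        simp only [fderiv_softMax_apply hβ.ne']
        gcongr
        exact integral_abs_sum_gibbsWeight_mul_le β
          (fun i ↦ (IsGaussian.hasGaussianLaw_id.eval i).integrable) hσ

lemma integral_abs_le_sqrt_variance {Ω : Type*} [MeasurableSpace Ω] {P : Measure Ω}
    [IsProbabilityMeasure P] {X : Ω → ℝ} (hX : MemLp X 2 P) (hmean : P[X] = 0) :
    ∫ ω, |X ω| ∂P ≤ √(Var[X; P]) := by
  rw [variance_of_integral_eq_zero hX.aemeasurable hmean]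
  refine le_sqrt_of_sq_le ?_
  have hvar := variance_nonneg |X| P
  rw [variance_eq_sub hX.abs] at hvar
  simpa [sq_abs] using hvar

lemma integral_sub_le_of_half_le_measure {Ω : Type*} [MeasurableSpace Ω] {P : Measure Ω}
    [IsProbabilityMeasure P] {g : Ω → ℝ} (hg : Measurable g) (hint : Integrable g P) {m : ℝ}
    (hm : 1 / 2 ≤ P {ω | g ω ≤ m}) :
    ∫ ω, g ω ∂P - m ≤ 2 * ∫ q, |g q.2 - g q.1| ∂P.prod P := by
  set S := {ω | g ω ≤ m}
  have hSmeas : MeasurableSet S := measurableSet_le hg measurable_const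
  have hSreal : 1 / 2 ≤ P.real S := by
    simpa [measureReal_def] using ENNReal.toReal_mono (measure_ne_top P S) hm
  have hdiff : Integrable (fun q ↦ |g q.2 - g q.1|) (P.prod P) :=
    ((hint.comp_snd P).sub (hint.comp_fst P)).abs
  have hslice : ∀ ω ∈ S, ∫ ω, g ω ∂P - m ≤ ∫ ω', |g ω' - g ω| ∂P := fun ω hω ↦
    calc ∫ ω, g ω ∂P - m ≤ ∫ ω', (g ω' - g ω) ∂P := by
          rw [integral_sub hint (integrable_const _), integral_const, probReal_univ, one_smul]
          exact sub_le_sub_left hω _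
      _ ≤ ∫ ω', |g ω' - g ω| ∂P := (le_abs_self _).trans abs_integral_le_integral_abs
  have hset : P.real S * (∫ ω, g ω ∂P - m) ≤ ∫ q, |g q.2 - g q.1| ∂P.prod P := by
    rw [integral_prod _ hdiff, ← smul_eq_mul, ← setIntegral_const]
    exact (setIntegral_mono_on (integrableOn_const (measure_ne_top _ _))
      hdiff.integral_prod_left.integrableOn hSmeas hslice).trans
      (setIntegral_le_integral hdiff.integral_prod_left
        (ae_of_all _ fun ω ↦ integral_nonneg fun _ ↦ abs_nonneg _))
  have hnonneg : 0 ≤ ∫ q, |g q.2 - g q.1| ∂P.prod P := integral_nonneg fun _ ↦ abs_nonneg _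
  rcases le_total (∫ ω, g ω ∂P - m) 0 with hneg | hpos
  · linarith
  · linarith [mul_le_mul_of_nonneg_right hSreal hpos]

end Concentration

section IndependentMaximum

lemma exp_div_three_le_gaussianReal_real_Ici {t : ℝ} (ht : 0 ≤ t) :
    exp (-(t + 1) ^ 2 / 2) / 3 ≤ (gaussianReal 0 1).real (Set.Ici t) := by
  have hdensity (x : ℝ) (hx : x ∈ Set.Icc t (t + 1)) :
      exp (-(t + 1) ^ 2 / 2) / 3 ≤ gaussianPDFReal 0 1 x := by
    have hsqrt : √(2 * π) ≤ 3 := by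
      rw [sqrt_le_left (by norm_num)]
      linarith [pi_lt_d2]
    have hsq : x ^ 2 ≤ (t + 1) ^ 2 := pow_le_pow_left₀ (ht.trans hx.1) hx.2 2
    rw [gaussianPDFReal, div_eq_inv_mul, NNReal.coe_one, mul_one, mul_one, sub_zero]
    gcongr
  calc exp (-(t + 1) ^ 2 / 2) / 3
      = ∫ _ in Set.Icc t (t + 1), exp (-(t + 1) ^ 2 / 2) / 3 := by
        rw [setIntegral_const, volume_real_Icc_of_le (by linarith), add_sub_cancel_left, one_smul]
    _ ≤ ∫ x in Set.Icc t (t + 1), gaussianPDFReal 0 1 x :=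
        setIntegral_mono_on (integrableOn_const (by simp))
          (integrable_gaussianPDFReal 0 1).integrableOn measurableSet_Icc hdensity
    _ = (gaussianReal 0 1).real (Set.Icc t (t + 1)) := by
        rw [measureReal_def, gaussianReal_apply_eq_integral 0 one_ne_zero,
          ENNReal.toReal_ofReal (integral_nonneg fun x ↦ gaussianPDFReal_nonneg 0 1 x)]
    _ ≤ (gaussianReal 0 1).real (Set.Ici t) := measureReal_mono Set.Icc_subset_Ici_self

variable {ι : Type*} [Fintype ι]

lemma measureReal_pi_Iio_le_exp (P : Measure ℝ) [IsProbabilityMeasure P] (t : ℝ) :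
    (Measure.pi fun _ : ι ↦ P).real (Set.univ.pi fun _ ↦ Set.Iio t) ≤
      exp (-(Fintype.card ι * P.real (Set.Ici t))) := by
  calc (Measure.pi fun _ : ι ↦ P).real (Set.univ.pi fun _ ↦ Set.Iio t)
      = (1 - P.real (Set.Ici t)) ^ Fintype.card ι := by
        rw [measureReal_def, Measure.pi_pi, Finset.prod_const, Finset.card_univ, ENNReal.toReal_pow,
          ← measureReal_def, ← Set.compl_Ici, probReal_compl_eq_one_sub measurableSet_Ici]
    _ ≤ exp (-P.real (Set.Ici t)) ^ Fintype.card ι :=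
        pow_le_pow_left₀ (sub_nonneg.2 measureReal_le_one) (one_sub_le_exp_neg _) _
    _ = exp (-(Fintype.card ι * P.real (Set.Ici t))) := by rw [← exp_nat_mul, mul_neg]

lemma sub_measureReal_mul_sub_le_integral_iSup {μ : Measure (ι → ℝ)} [IsProbabilityMeasure μ]
    (hμ : Integrable id μ) {t : ℝ} (i : ι) :
    t - μ.real (Set.univ.pi fun _ ↦ Set.Iio t) * t - ∫ y, |y i| ∂μ ≤ ∫ y, ⨆ j, y j ∂μ := by
  have : Nonempty ι := ⟨i⟩
  set A : Set (ι → ℝ) := Set.univ.pi fun _ ↦ Set.Iio t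
  have hA : MeasurableSet A := .univ_pi fun _ ↦ measurableSet_Iio
  have hcoord (y : ι → ℝ) (j : ι) : y j ≤ ⨆ k, y k := le_ciSup (Set.finite_range y).bddAbove j
  have hle (y : ι → ℝ) : t - A.indicator (fun _ ↦ t) y - |y i| ≤ ⨆ j, y j := by
    by_cases hy : y ∈ A
    · rw [Set.indicator_of_mem hy]
      linarith [neg_abs_le (y i), hcoord y i]
    · rw [Set.indicator_of_notMem hy]
      obtain ⟨j, hj⟩ : ∃ j, t ≤ y j := by simpa [A] using hy
      linarith [abs_nonneg (y i), hcoord y j]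
  have hind : Integrable (A.indicator fun _ ↦ t) μ := (integrable_const t).indicator hA
  have habs : Integrable (fun y ↦ |y i|) μ :=
    ((ContinuousLinearMap.proj (R := ℝ) (φ := fun _ : ι ↦ ℝ) i).integrable_comp hμ).abs
  have hdiff : Integrable (fun y ↦ t - A.indicator (fun _ ↦ t) y) μ := (integrable_const t).sub hind
  refine le_trans (le_of_eq ?_) (integral_mono (hdiff.sub habs) (integrable_iSup hμ) hle)
  simp only [Pi.sub_apply]
  rw [integral_sub hdiff habs, integral_sub (integrable_const t) hind, integral_indicator hA,
    setIntegral_const, integral_const, probReal_univ, one_smul, smul_eq_mul]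

lemma hasLaw_eval_pi_gaussianReal (v : ℝ≥0) (i : ι) :
    HasLaw (fun y : ι → ℝ ↦ y i) (gaussianReal 0 v) (Measure.pi fun _ ↦ gaussianReal 0 v) :=
  (measurePreserving_eval (fun _ : ι ↦ gaussianReal 0 v) i).hasLaw

instance isGaussian_pi_gaussianReal (v : ℝ≥0) :
    IsGaussian (Measure.pi fun _ : ι ↦ gaussianReal 0 v) := by
  have hjoint := iIndepFun.hasGaussianLaw
    (fun i : ι ↦ (hasLaw_eval_pi_gaussianReal v i).hasGaussianLaw)
    (iIndepFun_pi (X := fun _ ↦ id) fun _ ↦ aemeasurable_id)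
  simpa using hjoint.isGaussian_map

lemma integral_eval_pi_gaussianReal (v : ℝ≥0) (i : ι) :
    ∫ y, y i ∂Measure.pi (fun _ : ι ↦ gaussianReal 0 v) = 0 := by
  rw [(hasLaw_eval_pi_gaussianReal v i).integral_eq, integral_id_gaussianReal]

lemma variance_eval_pi_gaussianReal (v : ℝ≥0) (i : ι) :
    Var[fun y ↦ y i; Measure.pi (fun _ : ι ↦ gaussianReal 0 v)] = v := by
  rw [(hasLaw_eval_pi_gaussianReal v i).variance_eq, variance_id_gaussianReal]

lemma variance_sub_pi_gaussianReal (v : ℝ≥0) {i j : ι} (hij : i ≠ j) :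
    Var[fun y ↦ y i - y j; Measure.pi (fun _ : ι ↦ gaussianReal 0 v)] = 2 * v := by
  have hmem (k : ι) : MemLp (fun y ↦ y k) 2 (Measure.pi fun _ : ι ↦ gaussianReal 0 v) :=
    (hasLaw_eval_pi_gaussianReal v k).hasGaussianLaw.memLp_two
  have hindep : IndepFun (fun y ↦ y i) (fun y ↦ y j) (Measure.pi fun _ : ι ↦ gaussianReal 0 v) :=
    (iIndepFun_pi (X := fun _ ↦ id) fun _ ↦ aemeasurable_id).indepFun hij
  rw [variance_fun_sub (hmem i) (hmem j), hindep.covariance_eq_zero (hmem i) (hmem j)]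
  simp only [variance_eval_pi_gaussianReal]
  ring

lemma div_three_le_card_mul_gaussianReal_real_Ici [Nonempty ι]
    (hs : 2 ≤ √(2 * log (Fintype.card ι))) :
    √(2 * log (Fintype.card ι)) / 3 ≤
      Fintype.card ι * (gaussianReal 0 1).real (Set.Ici (√(2 * log (Fintype.card ι)) - 2)) := by
  have hcard : (1 : ℝ) ≤ Fintype.card ι := mod_cast Fintype.card_pos
  set s := √(2 * log (Fintype.card ι)) with hs_def
  have hcard_eq : (Fintype.card ι : ℝ) = exp (s ^ 2 / 2) := by
    rw [hs_def, sq_sqrt (by positivity [log_nonneg hcard]), mul_div_cancel_left₀ _ two_ne_zero,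
      exp_log (by linarith)]
  calc s / 3 ≤ exp (s - 1 / 2) / 3 := by linarith [add_one_le_exp (s - 1 / 2)]
    _ = Fintype.card ι * (exp (-(s - 2 + 1) ^ 2 / 2) / 3) := by
        rw [hcard_eq, ← mul_div_assoc, ← exp_add]
        congr 2
        ring
    _ ≤ Fintype.card ι * (gaussianReal 0 1).real (Set.Ici (s - 2)) := by
        gcongr
        exact exp_div_three_le_gaussianReal_real_Ici (by linarith)

lemma sqrt_two_mul_log_sub_six_le_integral_iSup [Nonempty ι] :
    √(2 * log (Fintype.card ι)) - 6 ≤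
      ∫ y, ⨆ i, y i ∂Measure.pi (fun _ : ι ↦ gaussianReal 0 1) := by
  obtain ⟨i⟩ := ‹Nonempty ι›
  set ν := Measure.pi fun _ : ι ↦ gaussianReal 0 1
  set s := √(2 * log (Fintype.card ι))
  have hint : Integrable id ν := (IsGaussian.memLp_id ν 1 (by simp)).integrable le_rfl
  have hmean : ∫ y, y i ∂ν = 0 := integral_eval_pi_gaussianReal 1 i
  have hcoord : MemLp (fun y ↦ y i) 2 ν := (IsGaussian.hasGaussianLaw_id.eval i).memLp_two
  rcases lt_or_ge s 2 with hs | hs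
  · have hle : ∫ y, y i ∂ν ≤ ∫ y, ⨆ j, y j ∂ν :=
      integral_mono (hcoord.integrable one_le_two) (integrable_iSup hint)
        fun y ↦ le_ciSup (Set.finite_range y).bddAbove i
    linarith
  · have habs : ∫ y, |y i| ∂ν ≤ 1 := by
      simpa [ν, variance_eval_pi_gaussianReal] using integral_abs_le_sqrt_variance hcoord hmean
    have hbelow : ν.real (Set.univ.pi fun _ ↦ Set.Iio (s - 2)) * (s - 2) ≤ 3 :=
      calc ν.real (Set.univ.pi fun _ ↦ Set.Iio (s - 2)) * (s - 2)
          ≤ exp (-(s / 3)) * s := by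
            gcongr
            · exact (measureReal_pi_Iio_le_exp _ _).trans
                (exp_le_exp.2 (neg_le_neg (div_three_le_card_mul_gaussianReal_real_Ici hs)))
            · linarith
        _ ≤ 3 := by
            rw [exp_neg, inv_mul_le_iff₀ (exp_pos _)]
            linarith [add_one_le_exp (s / 3)]
    linarith [sub_measureReal_mul_sub_le_integral_iSup hint (t := s - 2) i]

theorem sqrt_mul_sub_le_integral_iSup_pi_gaussianReal [Nonempty ι] (v : ℝ≥0) :
    √v * (√(2 * log (Fintype.card ι)) - 6) ≤
      ∫ y, ⨆ i, y i ∂Measure.pi (fun _ : ι ↦ gaussianReal 0 v) := by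
  have hscale : (gaussianReal 0 1).map (√v * ·) = gaussianReal 0 v := by
    rw [gaussianReal_map_const_mul, mul_zero, mul_one]
    congr 1
    exact NNReal.eq (sq_sqrt v.2)
  have hmap : Measure.pi (fun _ : ι ↦ gaussianReal 0 v) =
      (Measure.pi fun _ : ι ↦ gaussianReal 0 1).map fun y i ↦ √v * y i := by
    rw [Measure.pi_map_pi fun _ ↦ by fun_prop, hscale]
  rw [hmap, integral_map (Measurable.aemeasurable (by fun_prop))
    (Measurable.iSup measurable_pi_apply).aestronglyMeasurable]
  simp only [← Real.mul_iSup_of_nonneg (sqrt_nonneg _), integral_const_mul]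
  gcongr
  exact sqrt_two_mul_log_sub_six_le_integral_iSup

end IndependentMaximum

section CorrelatedMaximum

lemma neg_one_le_covariance {Ω : Type*} [MeasurableSpace Ω] {P : Measure Ω} [IsFiniteMeasure P]
    {X Y : Ω → ℝ} (hX : MemLp X 2 P) (hY : MemLp Y 2 P) (hVarX : Var[X; P] = 1)
    (hVarY : Var[Y; P] = 1) : -1 ≤ cov[X, Y; P] := by
  have hsum := variance_nonneg (fun ω ↦ X ω + Y ω) P
  rw [variance_fun_add hX hY, hVarX, hVarY] at hsum
  linarith

lemma integral_iSup_sub_le_of_half_le_measure {ι : Type*} [Finite ι] [Nonempty ι]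
    {μ : Measure (ι → ℝ)} [IsGaussian μ] (hμ : ∀ i, ∫ x, x i ∂μ = 0) {σ : ℝ}
    (hσ : ∀ i, ∫ x, |x i| ∂μ ≤ σ) {m : ℝ} (hm : 1 / 2 ≤ μ {x | ⨆ i, x i ≤ m}) :
    ∫ x, ⨆ i, x i ∂μ - m ≤ π * σ := by
  cases nonempty_fintype ι
  have hint : Integrable id μ := (IsGaussian.memLp_id μ 1 (by simp)).integrable le_rfl
  linarith [integral_sub_le_of_half_le_measure (Measurable.iSup measurable_pi_apply)
    (integrable_iSup hint) hm, integral_abs_iSup_sub_iSup_le hμ hσ]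

variable {ι : Type*} [Fintype ι]

lemma sqrt_mul_sub_le_integral_iSup_of_covariance_le [Nonempty ι] {μ : Measure (ι → ℝ)}
    [IsGaussian μ] (hμ : ∀ i, ∫ x, x i ∂μ = 0) (hvar : ∀ i, Var[fun x ↦ x i; μ] = 1)
    {ρ : ℝ} (hρ : ρ ≤ 1) (hcov : ∀ i j, i ≠ j → cov[fun x ↦ x i, fun x ↦ x j; μ] ≤ ρ) :
    √(1 - ρ) * (√(2 * log (Fintype.card ι)) - 6) ≤ ∫ x, ⨆ i, x i ∂μ := by
  lift 1 - ρ to ℝ≥0 using sub_nonneg.2 hρ with v hv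
  refine (sqrt_mul_sub_le_integral_iSup_pi_gaussianReal v).trans
    (integral_iSup_le_of_variance_sub_le hμ (integral_eval_pi_gaussianReal v) fun i j ↦ ?_)
  rcases eq_or_ne i j with rfl | hij
  · simp [variance_eq_integral]
  · have hmem (k : ι) : MemLp (fun x : ι → ℝ ↦ x k) 2 μ :=
      (IsGaussian.hasGaussianLaw_id.eval k).memLp_two
    rw [variance_sub_pi_gaussianReal v hij, variance_fun_sub (hmem i) (hmem j), hvar, hvar, hv]
    linarith [hcov i j hij]

lemma sqrt_sub_twelve_le_of_half_le_measure [Nontrivial ι] {μ : Measure (ι → ℝ)} [IsGaussian μ]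
    (hμ : ∀ i, ∫ x, x i ∂μ = 0) (hvar : ∀ i, Var[fun x ↦ x i; μ] = 1) {ρ : ℝ} (hρ : ρ ≤ 1)
    (hcov : ∀ i j, i ≠ j → cov[fun x ↦ x i, fun x ↦ x j; μ] ≤ ρ) {m : ℝ}
    (hm : 1 / 2 ≤ μ {x | ⨆ i, x i ≤ m}) :
    √(2 * (1 - ρ) * log (Fintype.card ι)) - 12 ≤ m := by
  have hmem (i : ι) : MemLp (fun x : ι → ℝ ↦ x i) 2 μ :=
    (IsGaussian.hasGaussianLaw_id.eval i).memLp_two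
  have habs (i : ι) : ∫ x, |x i| ∂μ ≤ 1 := by
    simpa only [hvar, sqrt_one] using integral_abs_le_sqrt_variance (hmem i) (hμ i)
  have hρ_ge : -1 ≤ ρ := by
    obtain ⟨i, j, hij⟩ := exists_pair_ne ι
    exact (neg_one_le_covariance (hmem i) (hmem j) (hvar i) (hvar j)).trans (hcov i j hij)
  have hsqrt : √(1 - ρ) ≤ 1.42 := by
    rw [sqrt_le_left (by norm_num)]
    linarith
  have hsplit : √(2 * (1 - ρ) * log (Fintype.card ι)) =
      √(1 - ρ) * √(2 * log (Fintype.card ι)) := by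
    rw [← sqrt_mul (sub_nonneg.2 hρ), mul_left_comm, mul_assoc]
  linarith [pi_lt_d2, sqrt_mul_sub_le_integral_iSup_of_covariance_le hμ hvar hρ hcov,
    integral_iSup_sub_le_of_half_le_measure hμ habs hm]

theorem lower_bound_on_median_of_max_general [Nontrivial ι] {Ω : Type*} [MeasurableSpace Ω]
    {P : Measure Ω} {X : ι → Ω → ℝ} (hX : HasGaussianLaw (fun ω ↦ (X · ω)) P)
    (hmean : ∀ i, P[X i] = 0) (hvar : ∀ i, Var[X i; P] = 1) {ρ : ℝ} (hρ : ρ ≤ 1)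
    (hcov : ∀ i j, i ≠ j → cov[X i, X j; P] ≤ ρ) {m : ℝ} (hm : 1 / 2 ≤ P {ω | ⨆ i, X i ω ≤ m}) :
    √(2 * (1 - ρ) * log (Fintype.card ι)) - 12 ≤ m := by
  have := hX.isGaussian_map
  have hlaw : HasLaw (fun ω ↦ (X · ω)) (P.map fun ω ↦ (X · ω)) P := ⟨hX.aemeasurable, rfl⟩
  refine sqrt_sub_twelve_le_of_half_le_measure (μ := P.map fun ω ↦ (X · ω))
    (fun i ↦ ?_) (fun i ↦ ?_) hρ (fun i j hij ↦ ?_) ?_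
  · exact (hlaw.integral_comp (measurable_pi_apply i).aestronglyMeasurable).symm.trans (hmean i)
  · exact (variance_map (measurable_pi_apply i).aemeasurable hX.aemeasurable).trans (hvar i)
  · exact (hlaw.covariance_fun_comp (measurable_pi_apply i).aemeasurable
      (measurable_pi_apply j).aemeasurable).symm.trans_le (hcov i j hij)
  · rwa [Measure.map_apply_of_aemeasurable hX.aemeasurable
      (measurableSet_le (Measurable.iSup measurable_pi_apply) measurable_const)]

end CorrelatedMaximum

namespace IsCenteredGaussianVec

variable {Ω : Type*} [MeasureSpace Ω] {n : ℕ} {X : Fin n → Ω → ℝ} {R : Matrix (Fin n) (Fin n) ℝ}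

lemma hasGaussianLaw (h : IsCenteredGaussianVec X R) : HasGaussianLaw (fun ω ↦ (X · ω)) ℙ where
  isGaussian_map := by
    refine isGaussian_of_map_eq_gaussianReal fun L ↦ ?_
    obtain ⟨a, ha⟩ := exists_strongDual_pi_apply_eq_sum L
    refine ⟨0, (∑ i, ∑ j, a i * R i j * a j).toNNReal, ?_⟩
    rw [Measure.map_map (by fun_prop) (measurable_pi_iff.2 h.1), ← h.2.2 a]
    exact congrArg (Measure.map · ℙ) (funext fun ω ↦ ha _)

lemma hasLaw_eval (h : IsCenteredGaussianVec X R) (i : Fin n) :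
    HasLaw (X i) (gaussianReal 0 1) ℙ where
  aemeasurable := (h.1 i).aemeasurable
  map_eq := by simpa [Pi.single_apply, h.2.1] using h.2.2 (Pi.single i 1)

lemma hasLaw_sub (h : IsCenteredGaussianVec X R) (i j : Fin n) :
    HasLaw (fun ω ↦ X i ω - X j ω) (gaussianReal 0 (2 - R i j - R j i).toNNReal) ℙ where
  aemeasurable := ((h.1 i).sub (h.1 j)).aemeasurable
  map_eq := by
    set a : Fin n → ℝ := Pi.single i 1 - Pi.single j 1
    have hquad : ∑ k, ∑ l, a k * R k l * a l = 2 - R i j - R j i := by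
      simp only [a, Pi.sub_apply, Pi.single_apply, sub_mul, ite_mul, one_mul, zero_mul, mul_sub,
        mul_ite, mul_one, mul_zero, Finset.sum_sub_distrib, Finset.sum_ite_eq', Finset.mem_univ,
        ↓reduceIte, h.2.1]
      ring
    have hcomb (ω : Ω) : ∑ k, a k * X k ω = X i ω - X j ω := by
      simp [a, Pi.single_apply, sub_mul]
    simpa only [hquad, hcomb] using h.2.2 a

lemma integral_eq_zero (h : IsCenteredGaussianVec X R) (i : Fin n) : 𝔼[X i] = 0 := by
  rw [(h.hasLaw_eval i).integral_eq, integral_id_gaussianReal]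

lemma variance_eq_one (h : IsCenteredGaussianVec X R) (i : Fin n) : Var[X i] = 1 := by
  rw [(h.hasLaw_eval i).variance_eq, variance_id_gaussianReal, NNReal.coe_one]

-- Only the symmetric part of `R` is determined by `X`, and the truncation `Real.toNNReal` in
-- `IsCenteredGaussianVec` turns the expected equality into an inequality.
lemma covariance_le (h : IsCenteredGaussianVec X R) (i j : Fin n) :
    cov[X i, X j] ≤ (R i j + R j i) / 2 := by
  have hprob := h.hasGaussianLaw.isProbabilityMeasure
  have hsub := (h.hasLaw_sub i j).variance_eq
  rw [variance_id_gaussianReal, variance_fun_sub (h.hasGaussianLaw.eval i).memLp_two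
    (h.hasGaussianLaw.eval j).memLp_two, h.variance_eq_one, h.variance_eq_one] at hsub
  linarith [le_coe_toNNReal (2 - R i j - R j i)]

lemma covariance_le_of_forall_le (h : IsCenteredGaussianVec X R) {ρ : ℝ}
    (hR : ∀ i j, i ≠ j → R i j ≤ ρ) (i j : Fin n) (hij : i ≠ j) : cov[X i, X j] ≤ ρ := by
  linarith [h.covariance_le i j, hR i j hij, hR j i hij.symm]

end IsCenteredGaussianVec

lemma log_log_three_pos : 0 < log (log 3) :=
  log_pos ((lt_log_iff_exp_lt (by norm_num)).2 (exp_one_lt_d9.trans (by norm_num)))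

theorem lower_bound_on_median_of_max :
    ∃ c₀ : ℝ, 0 < c₀ ∧
      ∀ (Ω : Type) [MeasureSpace Ω], IsProbabilityMeasure (ℙ : Measure Ω) →
        ∀ (n : ℕ), 2 ≤ n →
          ∀ (X : Fin n → Ω → ℝ) (R : Matrix (Fin n) (Fin n) ℝ) (ρ₀ : ℝ),
            ρ₀ ∈ Set.Ioo (0 : ℝ) 1 →
            IsCenteredGaussianVec X R →
            (∀ i j, i ≠ j → R i j ≤ ρ₀) →
            ∀ m : ℝ, IsMedian (fun ω => ⨆ i, X i ω) m →
              Real.sqrt (2 * (1 - ρ₀) * Real.log n)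
                  - c₀ * Real.sqrt (Real.log (Real.log (max (n : ℝ) 3)))
                ≤ m := by
  have hpos : 0 < √(log (log 3)) := sqrt_pos.2 log_log_three_pos
  refine ⟨12 / √(log (log 3)), by positivity, fun Ω _ _ n hn X R ρ hρ hX hR m hm ↦ ?_⟩
  have : Nontrivial (Fin n) := Fin.nontrivial_iff_two_le.2 hn
  have hmedian := lower_bound_on_median_of_max_general hX.hasGaussianLaw hX.integral_eq_zero
    hX.variance_eq_one hρ.2.le (hX.covariance_le_of_forall_le hR) hm.1
  rw [Fintype.card_fin] at hmedian
  have herror : 12 ≤ 12 / √(log (log 3)) * √(log (log (max (n : ℝ) 3))) :=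
    calc 12 = 12 / √(log (log 3)) * √(log (log 3)) := (div_mul_cancel₀ 12 hpos.ne').symm
      _ ≤ _ := by gcongr; exact le_max_right _ _
  linarith
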